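/- Let z₀ ∈ ℂ, r > 0, and let l ≥ 0 be an integer. Then for every w with |w − z₀| < r, ∫_{|ζ−z₀|≤r} (conj(ζ) − conj(z₀))^l / (ζ − w) dA(ζ) = −(π/(l+1)) (conj(w) − conj(z₀))^{l+1}. -/

import Mathlib

open Complex MeasureTheory Metric

/-!
In polar coordinates centred at `z₀`, the integral over the disk is the integral over the radii
`ρ ≤ r` of `2πρ` times the mean of the integrand over the circle of radius `ρ`. On the circle
`ζ = z₀ + ρz⁻¹`, `|z| = 1`, the integrand is `ρ ^ l z ^ (l + 1) / (ρ - (w - z₀) z)`. If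
`|w - z₀| < ρ`, this is holomorphic on the unit disk and vanishes at `0`, so its mean is zero; if
`ρ < |w - z₀|`, it has one pole there and Cauchy's formula gives the mean
`-ρ ^ (2l) / (w - z₀) ^ (l + 1)`. Hence only the radii `ρ ≤ |w - z₀|` contribute.
-/

open Set
open Real (circleAverage)
open scoped Real ComplexConjugate

section PolarCoordinates

variable {E : Type*} [NormedAddCommGroup E] [NormedSpace ℝ E] {f : ℂ → E}

lemma polarCoord_symm_eq_circleMap (p : ℝ × ℝ) :
    Complex.polarCoord.symm p = circleMap 0 p.1 p.2 := by
  rw [Complex.polarCoord_symm_apply, circleMap_zero, exp_mul_I, ofReal_cos, ofReal_sin]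

lemma integrableOn_comp_polarCoord_symm_iff :
    IntegrableOn (fun p ↦ p.1 • f (Complex.polarCoord.symm p)) polarCoord.target ↔
      Integrable f := by
  let e := measurableEquivRealProd.symm
  calc IntegrableOn (fun p ↦ p.1 • f (Complex.polarCoord.symm p)) polarCoord.target
    _ ↔ IntegrableOn (fun p ↦ |(fderivPolarCoordSymm p).det| • (f ∘ e) (polarCoord.symm p))
          polarCoord.target := by
        refine integrableOn_congr_fun (fun p hp ↦ ?_) polarCoord.open_target.measurableSet
        have hp₀ : 0 < p.1 := hp.1
        rw [det_fderivPolarCoordSymm, abs_of_pos hp₀, Function.comp_apply,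
          measurableEquivRealProd_symm_polarCoord_symm_apply]
    _ ↔ IntegrableOn (f ∘ e) (polarCoord.symm '' polarCoord.target) :=
        (integrableOn_image_iff_integrableOn_abs_det_fderiv_smul volume
          polarCoord.open_target.measurableSet
          (fun p _ ↦ (hasFDerivAt_polarCoord_symm p).hasFDerivWithinAt)
          polarCoord.symm.injOn _).symm
    _ ↔ Integrable (f ∘ e) := by
        rw [polarCoord.symm_image_target_eq_source,
          integrableOn_congr_set_ae polarCoord_source_ae_eq_univ, integrableOn_univ]
    _ ↔ Integrable f :=
        volume_preserving_equiv_real_prod.symm.integrable_comp_emb e.measurableEmbedding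

lemma setIntegral_Ioo_comp_circleMap (f : ℂ → E) (c : ℂ) (ρ : ℝ) :
    ∫ θ in Ioo (-π) π, f (circleMap c ρ θ) = (2 * π) • circleAverage f c ρ := by
  have hper : Function.Periodic (fun θ ↦ f (circleMap c ρ θ)) (2 * π) :=
    (periodic_circleMap c ρ).comp f
  rw [← integral_Ioc_eq_integral_Ioo,
    ← intervalIntegral.integral_of_le (by linarith [Real.pi_pos]), Real.circleAverage_def,
    smul_inv_smul₀ Real.two_pi_pos.ne']
  convert hper.intervalIntegral_add_eq (-π) 0 using 2 <;> ring

lemma integral_eq_integral_circleAverage (hf : Integrable f) (c : ℂ) :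
    ∫ z, f z = ∫ ρ in Ioi (0 : ℝ), (2 * π * ρ) • circleAverage f c ρ := by
  have hint := integrableOn_comp_polarCoord_symm_iff.2 (hf.comp_add_right c)
  calc ∫ z, f z
    _ = ∫ z, f (z + c) := (integral_add_right_eq_self f c).symm
    _ = ∫ ρ in Ioi (0 : ℝ), ∫ θ in Ioo (-π) π, ρ • f (circleMap 0 ρ θ + c) := by
        simp only [polarCoord_symm_eq_circleMap] at hint
        rw [← Complex.integral_comp_polarCoord_symm]
        simp only [polarCoord_symm_eq_circleMap]
        exact setIntegral_prod _ hint
    _ = ∫ ρ in Ioi (0 : ℝ), (2 * π * ρ) • circleAverage f c ρ := by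
        congr with ρ
        rw [integral_smul, setIntegral_Ioo_comp_circleMap (fun z ↦ f (z + c)),
          Real.circleAverage_map_add_const, smul_smul, mul_comm]

lemma setIntegral_closedBall_eq_integral_circleAverage {c : ℂ} {r : ℝ}
    (hf : IntegrableOn f (closedBall c r)) :
    ∫ z in closedBall c r, f z = ∫ ρ in Ioc 0 r, (2 * π * ρ) • circleAverage f c ρ := by
  have hball : MeasurableSet (closedBall c r) := isClosed_closedBall.measurableSet
  rw [← integral_indicator hball,
    integral_eq_integral_circleAverage (hf.integrable_indicator hball) c, ← Ioi_inter_Iic,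
    ← setIntegral_indicator measurableSet_Iic]
  refine setIntegral_congr_fun measurableSet_Ioi fun ρ (hρ : 0 < ρ) ↦ ?_
  by_cases hρr : ρ ≤ r
  · have heq : EqOn ((closedBall c r).indicator f) f (sphere c |ρ|) := fun z hz ↦
      indicator_of_mem (sphere_subset_closedBall.trans
        (closedBall_subset_closedBall ((abs_of_pos hρ).trans_le hρr)) hz) f
    simp only [Real.circleAverage_congr_sphere heq, indicator_of_mem (mem_Iic.2 hρr)]
  · have heq : EqOn ((closedBall c r).indicator f) (fun _ ↦ 0) (sphere c |ρ|) := fun z hz ↦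
      indicator_of_notMem (by rwa [mem_closedBall, mem_sphere.1 hz, abs_of_pos hρ]) f
    simp [Real.circleAverage_congr_sphere heq, Real.circleAverage_def, hρr]

end PolarCoordinates

section LocallyIntegrable

lemma locallyIntegrable_comp_sub_right {G F : Type*} [AddGroup G] [TopologicalSpace G]
    [IsTopologicalAddGroup G] [MeasurableSpace G] [BorelSpace G] [NormedAddCommGroup F]
    {μ : Measure G} [μ.IsAddRightInvariant] {f : G → F} (hf : LocallyIntegrable f μ) (c : G) :
    LocallyIntegrable (fun x ↦ f (x - c)) μ := by
  intro x
  obtain ⟨s, hs, hfs⟩ := hf (x - c)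
  exact ⟨(· - c) ⁻¹' s, (continuous_sub_right c).continuousAt hs,
    ((measurePreserving_sub_right μ c).integrableOn_comp_preimage
      (measurableEmbedding_subRight c)).2 hfs⟩

variable {𝕜 : Type*} [NormedDivisionRing 𝕜] [NormedAlgebra ℝ 𝕜] [FiniteDimensional ℝ 𝕜]
  [MeasurableSpace 𝕜] [BorelSpace 𝕜] {μ : Measure 𝕜} [μ.IsAddHaarMeasure]

lemma locallyIntegrable_inv (hdim : 1 < Module.finrank ℝ 𝕜) :
    LocallyIntegrable (fun x : 𝕜 ↦ x⁻¹) μ := by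
  refine locallyIntegrable_of_norm_le_rpow (C := 1) (α := 1) hdim.le (mod_cast hdim)
    (.of_forall fun x ↦ ?_) measurable_inv.aestronglyMeasurable
  rw [norm_inv, one_mul, Real.rpow_neg_one]

lemma integrableOn_div_sub (hdim : 1 < Module.finrank ℝ 𝕜) {g : 𝕜 → 𝕜} {K : Set 𝕜}
    (hK : IsCompact K) (hg : ContinuousOn g K) (w : 𝕜) :
    IntegrableOn (fun x ↦ g x / (x - w)) K μ := by
  simpa only [div_eq_mul_inv] using
    ((locallyIntegrable_comp_sub_right (locallyIntegrable_inv hdim) w).integrableOn_isCompact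
      hK).continuousOn_mul hg hK

end LocallyIntegrable

section CircleAverage

-- On the unit circle `conj z = z⁻¹`, so inverting the circle makes the integrand meromorphic.
lemma circleAverage_conj_pow_div_sub_eq (c w : ℂ) (ρ : ℝ) (l : ℕ) :
    circleAverage (fun ζ ↦ conj (ζ - c) ^ l / (ζ - w)) c ρ =
      circleAverage (fun z ↦ ρ ^ l * z ^ (l + 1) / (ρ - (w - c) * z)) 0 1 := by
  rw [Real.circleAverage_eq_circleAverage_zero_one, ← Real.circleAverage_zero_one_congr_inv]
  refine Real.circleAverage_congr_sphere fun z hz ↦ ?_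
  have hz₁ : ‖z‖ = 1 := by simpa using hz
  have hz₀ : z ≠ 0 := norm_ne_zero_iff.1 (hz₁ ▸ one_ne_zero)
  have hconj : conj (ρ * z⁻¹ + c - c) = ρ * z := by
    rw [add_sub_cancel_right, map_mul, conj_ofReal, inv_eq_conj hz₁, conj_conj]
  have hden : ρ * z⁻¹ + c - w = (ρ - (w - c) * z) / z := by field_simp; ring
  simp only [hconj, hden, div_div_eq_mul_div]
  ring

variable {c w : ℂ} {ρ : ℝ}

lemma circleAverage_conj_pow_div_sub_of_norm_sub_lt (hw : ‖w - c‖ < |ρ|) (l : ℕ) :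
    circleAverage (fun ζ ↦ conj (ζ - c) ^ l / (ζ - w)) c ρ = 0 := by
  have hden : ∀ z ∈ closedBall (0 : ℂ) 1, (ρ : ℂ) - (w - c) * z ≠ 0 := fun z hz h ↦ by
    have hρ : |ρ| = ‖w - c‖ * ‖z‖ := by
      rw [← norm_mul, ← sub_eq_zero.1 h, norm_real, Real.norm_eq_abs]
    exact hw.not_ge (hρ.trans_le (mul_le_of_le_one_right (norm_nonneg _)
      (mem_closedBall_zero_iff.1 hz)))
  have hdiff : DifferentiableOn ℂ
      (fun z : ℂ ↦ ρ ^ l * z ^ (l + 1) / (ρ - (w - c) * z)) (closedBall 0 1) :=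
    .div (by fun_prop) (by fun_prop) hden
  rw [circleAverage_conj_pow_div_sub_eq, DiffContOnCl.circleAverage]
  · simp
  · rw [abs_one]
    exact (hdiff.mono closure_ball_subset_closedBall).diffContOnCl

lemma circleAverage_conj_pow_div_sub_of_lt_norm_sub (hw : |ρ| < ‖w - c‖) (l : ℕ) :
    circleAverage (fun ζ ↦ conj (ζ - c) ^ l / (ζ - w)) c ρ =
      -(ρ ^ (2 * l) / (w - c) ^ (l + 1)) := by
  have hwc : w - c ≠ 0 := norm_pos_iff.1 ((abs_nonneg ρ).trans_lt hw)
  have hpole : (ρ : ℂ) / (w - c) ∈ ball (0 : ℂ) |1| := by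
    rw [abs_one, mem_ball_zero_iff, norm_div, norm_real, Real.norm_eq_abs]
    exact (div_lt_one (norm_pos_iff.2 hwc)).2 hw
  have hdiff : DiffContOnCl ℂ (fun z : ℂ ↦ -(ρ ^ l / (w - c)) * z ^ l) (ball 0 |1|) :=
    Differentiable.diffContOnCl (by fun_prop)
  have hcauchy : ∀ z : ℂ, ρ ^ l * z ^ (l + 1) / (ρ - (w - c) * z) =
      ((z - 0) / (z - ρ / (w - c))) • (-(ρ ^ l / (w - c)) * z ^ l) := fun z ↦ by
    have hden : ρ - (w - c) * z = -((w - c) * (z - ρ / (w - c))) := by field_simp; ring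
    rw [hden, sub_zero, smul_eq_mul, pow_succ]
    field
  simp only [circleAverage_conj_pow_div_sub_eq, hcauchy]
  rw [hdiff.circleAverage_smul_div hpole, div_pow, two_mul, pow_add, pow_succ]
  field

end CircleAverage

lemma norm_pow_div_pow_eq_conj_pow (a : ℂ) (n : ℕ) :
    (‖a‖ : ℂ) ^ (2 * n) / a ^ n = conj a ^ n := by
  obtain rfl | ha := eq_or_ne a 0
  · cases n <;> simp
  · rw [pow_mul, ← conj_mul', mul_pow, mul_div_cancel_right₀ _ (pow_ne_zero n ha)]

-- At `w = z₀` the quotient on the right is `0 / 0 = 0`, which is the value of the integral.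
theorem integral_conj_power_general (z₀ w : ℂ) {r : ℝ} (hr : 0 ≤ r) (l : ℕ) :
    ∫ ζ in closedBall z₀ r, (conj ζ - conj z₀) ^ l / (ζ - w) =
      -((π : ℂ) / (l + 1)) *
        (((min r ‖w - z₀‖ : ℝ) : ℂ) ^ (2 * (l + 1)) / (w - z₀) ^ (l + 1)) := by
  simp only [← map_sub]
  have hint : IntegrableOn (fun ζ ↦ conj (ζ - z₀) ^ l / (ζ - w)) (closedBall z₀ r) :=
    integrableOn_div_sub (by simp) (isCompact_closedBall z₀ r) (by fun_prop) w
  have havg : ∀ᵐ ρ, ρ ∈ Ioc 0 r →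
      (2 * π * ρ) • circleAverage (fun ζ ↦ conj (ζ - z₀) ^ l / (ζ - w)) z₀ ρ =
        (Iic ‖w - z₀‖).indicator
          (fun ρ : ℝ ↦ -(2 * π / (w - z₀) ^ (l + 1)) * ((ρ ^ (2 * l + 1) : ℝ) : ℂ)) ρ := by
    filter_upwards [Measure.ae_ne volume ‖w - z₀‖] with ρ hne hρ
    have hρ₀ : |ρ| = ρ := abs_of_pos hρ.1
    obtain hlt | hgt := hne.lt_or_gt
    · rw [circleAverage_conj_pow_div_sub_of_lt_norm_sub (hρ₀.trans_lt hlt),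
        indicator_of_mem (mem_Iic.2 hlt.le), real_smul]
      push_cast
      ring
    · rw [circleAverage_conj_pow_div_sub_of_norm_sub_lt (hgt.trans_eq hρ₀.symm), smul_zero,
        indicator_of_notMem (notMem_Iic.2 hgt)]
  rw [setIntegral_closedBall_eq_integral_circleAverage hint,
    setIntegral_congr_ae measurableSet_Ioc havg, setIntegral_indicator measurableSet_Iic,
    Ioc_inter_Iic, integral_const_mul, integral_complex_ofReal,
    ← intervalIntegral.integral_of_le (le_min hr (norm_nonneg _)), integral_pow]
  have hl : (l : ℂ) + 1 ≠ 0 := Nat.cast_add_one_ne_zero l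
  have hexp : (2 * l + 1 + 1 : ℂ) = 2 * (l + 1) := by ring
  push_cast
  rw [zero_pow (by lia), sub_zero, hexp]
  field

/-- `∫_{|ζ−z₀|≤r} (conj ζ − conj z₀)^l/(ζ − w) dA(ζ)
  = −(π/(l+1)) (conj w − conj z₀)^{l+1}` for `|w − z₀| < r`. -/
theorem integral_conj_power (z₀ : ℂ) (r : ℝ) (hr : 0 < r) (l : ℕ) :
    ∀ w ∈ ball z₀ r,
      (∫ ζ in closedBall z₀ r, ((starRingEnd ℂ) ζ - (starRingEnd ℂ) z₀) ^ l / (ζ - w))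
        = -((Real.pi : ℂ) / (l + 1)) * ((starRingEnd ℂ) w - (starRingEnd ℂ) z₀) ^ (l + 1) := by
  intro w hw
  rw [integral_conj_power_general z₀ w hr.le, min_eq_right (mem_ball_iff_norm.1 hw).le,
    norm_pow_div_pow_eq_conj_pow, map_sub]
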